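/- Suppose d, n ∈ ℕ are such that 3 ≤ d ≤ n/4 and S ⊆ V satisfies |S| ≤ n/6. Let G be a simple d-regular graph on V, let u ∈ S and v ∈ V∖S with uv ∈ E(G). Then the number of ordered pairs (x, y) of distinct vertices with x, y ∈ V∖S, {x,y} ≠ {u,v}, xy ∈ E(G), vx ∉ E(G) and uy ∉ E(G) is at least dn − 2d|S| − 2d², and this quantity is at least dn/6. -/

import Mathlib

open scoped Classical BigOperators

noncomputable section

/-!
The eligible pairs `(x, y)` are exactly the oriented edges that start outside `S ∪ N(v)` and end
outside `S ∪ N(u)`: the condition `{x, y} ≠ {u, v}` is automatic because `u ∈ S`. Each of these two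
sets has at most `|S| + d` vertices, and exactly `dk` oriented edges start (or end) in a given set
of `k` vertices, so at most `2d(|S| + d)` of the `dn` oriented edges are lost.
-/

theorem mul_div_six_le_sub {d n k : ℝ} (hd : 0 ≤ d) (hdn : 4 * d ≤ n) (hk : 6 * k ≤ n) :
    d * n / 6 ≤ d * n - 2 * d * k - 2 * d ^ 2 := by
  linarith [mul_le_mul_of_nonneg_left hdn hd, mul_le_mul_of_nonneg_left hk hd]

section

open Finset

variable {V : Type*} [Fintype V] (G : SimpleGraph V) [DecidableRel G.Adj]

theorem card_interedges_univ_right (s : Finset V) :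
    #(G.interedges s univ) = ∑ x ∈ s, G.degree x := by
  simp only [SimpleGraph.interedges_def, card_filter, sum_product,
    ← G.card_neighborFinset_eq_degree, G.neighborFinset_eq_filter]

theorem card_interedges_univ_left (t : Finset V) :
    #(G.interedges univ t) = ∑ y ∈ t, G.degree y := by
  rw [← card_interedges_univ_right]
  have : Std.Symm G.Adj := ⟨fun _ _ => SimpleGraph.Adj.symm⟩
  exact Rel.card_interedges_comm univ t

variable [DecidableEq V]

theorem interedges_univ_subset (s t : Finset V) :
    G.interedges univ univ ⊆
      G.interedges sᶜ tᶜ ∪ (G.interedges s univ ∪ G.interedges univ t) := by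
  intro e
  simp only [mem_union, SimpleGraph.mem_interedges_iff, mem_compl, mem_univ, true_and]
  tauto

theorem sum_degree_le_card_interedges_compl_add (s t : Finset V) :
    ∑ x, G.degree x ≤
      #(G.interedges sᶜ tᶜ) + (∑ x ∈ s, G.degree x + ∑ y ∈ t, G.degree y) :=
  calc ∑ x, G.degree x = #(G.interedges univ univ) := (card_interedges_univ_right G univ).symm
    _ ≤ #(G.interedges sᶜ tᶜ ∪ (G.interedges s univ ∪ G.interedges univ t)) :=
      card_le_card (interedges_univ_subset G s t)
    _ ≤ #(G.interedges sᶜ tᶜ) + (#(G.interedges s univ) + #(G.interedges univ t)) := by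
      grw [card_union_le, card_union_le]
    _ = _ := by rw [card_interedges_univ_right, card_interedges_univ_left]

/-- The oriented edges `(x, y)` of `G` with both ends outside `S`, other than `uv`, that are
candidates for switching `uv` and `xy` to `vx` and `uy`: neither of these is an edge of `G`. The
degenerate cases `x = v` and `y = u` are not excluded. -/
def switchingPairs (S : Finset V) (u v : V) : Finset (V × V) :=
  {q | q.1 ≠ q.2 ∧ q.1 ∉ S ∧ q.2 ∉ S ∧ s(q.1, q.2) ≠ s(u, v) ∧
    G.Adj q.1 q.2 ∧ ¬ G.Adj v q.1 ∧ ¬ G.Adj u q.2}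

theorem switchingPairs_eq_interedges_compl {S : Finset V} {u : V} (hu : u ∈ S) (v : V) :
    switchingPairs G S u v =
      G.interedges (S ∪ G.neighborFinset v)ᶜ (S ∪ G.neighborFinset u)ᶜ := by
  ext ⟨x, y⟩
  have ne_of_notMem (hx : x ∉ S) (hy : y ∉ S) : s(x, y) ≠ s(u, v) := by
    intro h
    rcases Sym2.eq_iff.1 h with ⟨rfl, -⟩ | ⟨-, rfl⟩ <;> contradiction
  have ne_of_adj : G.Adj x y → x ≠ y := SimpleGraph.Adj.ne
  simp only [switchingPairs, mem_filter_univ, SimpleGraph.mk_mem_interedges_iff, mem_compl,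
    mem_union, SimpleGraph.mem_neighborFinset]
  tauto

variable {G} {d : ℕ}

theorem mul_card_le_card_interedges_compl_add (hG : G.IsRegularOfDegree d) (s t : Finset V) :
    d * Fintype.card V ≤ #(G.interedges sᶜ tᶜ) + d * (#s + #t) := by
  have h := sum_degree_le_card_interedges_compl_add G s t
  simp only [hG.degree_eq, sum_const, smul_eq_mul, card_univ] at h
  linarith

theorem card_union_neighborFinset_le (hG : G.IsRegularOfDegree d) (S : Finset V) (w : V) :
    #(S ∪ G.neighborFinset w) ≤ #S + d := by
  grw [card_union_le, G.card_neighborFinset_eq_degree, hG.degree_eq]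

theorem mul_card_le_card_switchingPairs_add (hG : G.IsRegularOfDegree d) {S : Finset V} {u : V}
    (hu : u ∈ S) (v : V) :
    d * Fintype.card V ≤ #(switchingPairs G S u v) + d * ((#S + d) + (#S + d)) := by
  rw [switchingPairs_eq_interedges_compl G hu v]
  grw [mul_card_le_card_interedges_compl_add hG (S ∪ G.neighborFinset v) (S ∪ G.neighborFinset u),
    card_union_neighborFinset_le hG S v, card_union_neighborFinset_le hG S u]

theorem statement_8_general (hG : G.IsRegularOfDegree d) (hd : 4 * d ≤ Fintype.card V)
    {S : Finset V} (hS : 6 * #S ≤ Fintype.card V) {u : V} (hu : u ∈ S) (v : V) :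
    (d : ℝ) * Fintype.card V - 2 * d * #S - 2 * (d : ℝ) ^ 2 ≤ #(switchingPairs G S u v) ∧
    (d : ℝ) * Fintype.card V / 6 ≤ d * Fintype.card V - 2 * d * #S - 2 * (d : ℝ) ^ 2 := by
  constructor
  · have h := mul_card_le_card_switchingPairs_add hG hu v
    rify at h
    linarith
  · exact mul_div_six_le_sub d.cast_nonneg (mod_cast hd) (mod_cast hS)

end

/-- **Counting step of Lemma 3.1.** For a simple `d`-regular graph `G` on `n` vertices
with `3 ≤ d ≤ n/4`, `|S| ≤ n/6`, `u ∈ S`, `v ∉ S` and `uv ∈ E(G)`, the number of ordered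
pairs `(x,y)` of distinct vertices outside `S` with `{x,y} ≠ {u,v}`, `xy ∈ E(G)`,
`vx ∉ E(G)` and `uy ∉ E(G)` is at least `dn - 2d|S| - 2d²`, which is at least `dn/6`. -/
theorem statement_8 (n d : ℕ) (hd : 3 ≤ d) (hdn : 4 * d ≤ n)
    (S : Finset (Fin n)) (hS : 6 * S.card ≤ n)
    (G : SimpleGraph (Fin n)) (hreg : ∀ w, G.degree w = d)
    (u v : Fin n) (hu : u ∈ S) (hv : v ∉ S) (huv : G.Adj u v) :
    ((d : ℝ) * n - 2 * d * S.card - 2 * (d : ℝ) ^ 2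
      ≤ ((Finset.univ.filter (fun q : Fin n × Fin n =>
          q.1 ≠ q.2 ∧ q.1 ∉ S ∧ q.2 ∉ S ∧ s(q.1, q.2) ≠ s(u, v) ∧
          G.Adj q.1 q.2 ∧ ¬ G.Adj v q.1 ∧ ¬ G.Adj u q.2)).card : ℝ)) ∧
    (d : ℝ) * n / 6 ≤ (d : ℝ) * n - 2 * d * S.card - 2 * (d : ℝ) ^ 2 := by
  simpa only [switchingPairs, Fintype.card_fin] using
    statement_8_general hreg (by rwa [Fintype.card_fin]) (by rwa [Fintype.card_fin]) hu v
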